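/- Let H be a complex Hilbert space, let K be a compact linear operator on H, and let λ ∈ ℂ. Then the operator λI + K is not norm-unimodal. -/

import Mathlib

open Filter Topology MeasureTheory
open scoped Classical ENNReal

noncomputable def distFreq {X : Type*} [MetricSpace X] (f : X → X) (x y : X) (τ : ℝ) (n : ℕ) : ℝ :=
  (((Finset.range n).filter fun i => dist (f^[i] x) (f^[i] y) < τ).card : ℝ) / n

def DistributionallyChaoticPair {X : Type*} [MetricSpace X] (f : X → X) (x y : X) : Prop :=
  (∀ τ : ℝ, 0 < τ → Filter.limsup (distFreq f x y τ) Filter.atTop = 1) ∧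
  (∃ ε : ℝ, 0 < ε ∧ Filter.liminf (distFreq f x y ε) Filter.atTop = 0)

def DistributionallyChaotic {X : Type*} [MetricSpace X] (f : X → X) : Prop :=
  ∃ Λ : Set X, ¬Λ.Countable ∧
    ∀ x ∈ Λ, ∀ y ∈ Λ, x ≠ y → DistributionallyChaoticPair f x y

def LiYorkePair {X : Type*} [MetricSpace X] (f : X → X) (x y : X) : Prop :=
  0 < Filter.limsup (fun n => edist (f^[n] x) (f^[n] y)) Filter.atTop ∧
  Filter.liminf (fun n => edist (f^[n] x) (f^[n] y)) Filter.atTop = 0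

def LiYorkeChaotic {X : Type*} [MetricSpace X] (f : X → X) : Prop :=
  ∃ Γ : Set X, ¬Γ.Countable ∧ ∀ x ∈ Γ, ∀ y ∈ Γ, x ≠ y → LiYorkePair f x y

def NormUnimodal {X : Type*} [NormedAddCommGroup X] [NormedSpace ℂ X] (T : X →L[ℂ] X) : Prop :=
  ∃ r : ℝ, 1 < r ∧ ∀ m : ℕ, ∃ x : X, x ≠ 0 ∧
    Filter.Tendsto (fun k => ‖(T ^ k) x‖) Filter.atTop (nhds 0) ∧
    ∀ i : ℕ, 1 ≤ i → i ≤ m → r ^ i * ‖x‖ ≤ ‖(T ^ i) x‖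

/-!
Write `T = λI + K` and fix `r > 1`. If `D ⊆ ℂ` stays away from `λ`, the Riesz lemma on almost
orthogonal vectors shows that a chain of finite-dimensional invariant subspaces whose successive
quotients are one-dimensional with eigenvalue in `D` must terminate. Its last member `F` behaves
like the range of the Riesz projection for `D`: `T` has its spectrum in `D` on `F` and outside `D`
on `X ⧸ F`.

Now let `x` have a null orbit. If `|λ| > 1`, take for `D` the closed unit disc: the spectrum on
`X ⧸ F` lies outside this disc, so the class of `x` vanishes, and on `F` the spectral radius is at
most `1`. If `|λ| ≤ 1`, take `D = {|z| ≥ r}`: applying the characteristic polynomial of `T` on `F`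
embeds `X ⧸ F` equivariantly in `X`. As `F` contains no nonzero null orbit, `x` lies in
this copy of `X ⧸ F`, where the spectral radius is less than `r`. Either way `‖Tⁿ x‖ < rⁿ ‖x‖` for
all large `n`, uniformly in `x`.
-/

open Polynomial
open scoped NNReal

section Semiconj

variable {𝕜 X Y : Type*} [CommRing 𝕜]
  [TopologicalSpace X] [AddCommGroup X] [Module 𝕜 X]
  [TopologicalSpace Y] [AddCommGroup Y] [Module 𝕜 Y]
  {A : X →L[𝕜] X} {B : Y →L[𝕜] Y} {Q : X →L[𝕜] Y}

lemma semiconj_pow (h : Function.Semiconj Q A B) (n : ℕ) :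
    Function.Semiconj Q (A ^ n : X →L[𝕜] X) (B ^ n : Y →L[𝕜] Y) := by
  simpa only [FunLike.coe_pow_eq_iterate] using h.iterate_right n

lemma semiconj_subtypeL {F : Submodule 𝕜 X} (h : ∀ x ∈ F, A x ∈ F) :
    Function.Semiconj F.subtypeL (A.restrict h) A :=
  fun _ ↦ rfl

lemma tendsto_pow_apply_of_semiconj (h : Function.Semiconj Q A B) {x : X}
    (hx : Tendsto (fun n ↦ (A ^ n) x) atTop (𝓝 0)) :
    Tendsto (fun n ↦ (B ^ n) (Q x)) atTop (𝓝 0) := by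
  simpa only [Function.comp_def, map_zero, (semiconj_pow h _).eq x] using
    (Q.continuous.tendsto 0).comp hx

variable [IsTopologicalAddGroup X] [ContinuousConstSMul 𝕜 X]

lemma semiconj_aeval [IsTopologicalAddGroup Y] [ContinuousConstSMul 𝕜 Y]
    (h : Function.Semiconj Q A B) (p : 𝕜[X]) :
    Function.Semiconj Q (aeval A p) (aeval B p) := by
  intro x
  induction p using Polynomial.induction_on' with
  | add p q hp hq => simp only [map_add, add_apply, hp, hq]
  | monomial n c =>
    simp only [aeval_monomial, ← Algebra.smul_def, smul_apply, map_smul, (semiconj_pow h n).eq x]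

lemma toLinearMap_aeval (A : X →L[𝕜] X) (p : 𝕜[X]) :
    (aeval A p).toLinearMap = aeval A.toLinearMap p :=
  hom_eval₂ p (algebraMap 𝕜 (X →L[𝕜] X)) ContinuousLinearMap.toLinearMapRingHom A

end Semiconj

lemma isUnit_aeval_of_forall_mem_spectrum_not_isRoot {𝕜 A : Type*} [Field 𝕜]
    [Ring A] [Algebra 𝕜 A] {a : A} {p : 𝕜[X]} (hmonic : p.Monic) (hsplits : p.Splits)
    (h : ∀ z ∈ spectrum 𝕜 a, ¬ p.IsRoot z) : IsUnit (aeval a p) := by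
  by_contra hnot
  rw [hsplits.eq_prod_roots_of_monic hmonic] at hnot
  obtain ⟨z, hz, hroot⟩ := spectrum.exists_mem_of_not_isUnit_aeval_prod hnot
  exact h z hz hroot

section Gelfand

variable {A : Type*} [NormedRing A] [NormedAlgebra ℂ A] [CompleteSpace A] {a : A} {r : ℝ}

lemma spectralRadius_lt_of_forall_norm_lt (hr : 0 < r) (h : ∀ z ∈ spectrum ℂ a, ‖z‖ < r) :
    spectralRadius ℂ a < ENNReal.ofReal r := by
  rcases subsingleton_or_nontrivial A with _ | _
  · simpa only [spectrum.SpectralRadius.of_subsingleton] using ENNReal.ofReal_pos.2 hr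
  · exact spectrum.spectralRadius_lt_of_forall_lt a (r := r.toNNReal) fun z hz ↦ by
      simpa [← NNReal.coe_lt_coe, hr.le] using h z hz

lemma eventually_norm_pow_le_of_spectralRadius_lt {s : ℝ≥0} (h : spectralRadius ℂ a < s) :
    ∀ᶠ n in atTop, ‖a ^ n‖ ≤ (s : ℝ) ^ n := by
  have hroot :=
    (spectrum.pow_nnnorm_pow_one_div_tendsto_nhds_spectralRadius a).eventually_lt_const h
  filter_upwards [hroot, eventually_gt_atTop 0] with n hn hpos
  have := ENNReal.rpow_le_rpow hn.le n.cast_nonneg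
  rw [← ENNReal.rpow_mul, one_div_mul_cancel (by positivity), ENNReal.rpow_one,
    ENNReal.rpow_natCast] at this
  exact_mod_cast this

lemma isLittleO_pow_of_forall_spectrum_norm_lt (hr : 0 < r) (h : ∀ z ∈ spectrum ℂ a, ‖z‖ < r) :
    (fun n ↦ a ^ n) =o[atTop] (fun n ↦ r ^ n) := by
  obtain ⟨s, has, hsr⟩ :=
    ENNReal.lt_iff_exists_nnreal_btwn.1 (spectralRadius_lt_of_forall_norm_lt hr h)
  have hsr' : (s : ℝ) < r := by simpa only [ENNReal.ofReal_coe_nnreal] using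
    (ENNReal.ofReal_lt_ofReal_iff hr).1 (ENNReal.ofReal_coe_nnreal.symm ▸ hsr)
  refine Asymptotics.IsBigO.trans_isLittleO (.of_bound' ?_) (isLittleO_pow_pow_of_lt_left s.2 hsr')
  filter_upwards [eventually_norm_pow_le_of_spectralRadius_lt has] with n hn
  exact hn.trans (le_abs_self _)

lemma eventually_norm_comp_pow_apply_lt {X Y Z : Type*} [NormedAddCommGroup X] [NormedSpace ℂ X]
    [CompleteSpace X] [NormedAddCommGroup Y] [NormedSpace ℂ Y] [NormedAddCommGroup Z]
    [NormedSpace ℂ Z] {A : X →L[ℂ] X} (hr : 0 < r) (hA : ∀ z ∈ spectrum ℂ A, ‖z‖ < r)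
    (Q : Y →L[ℂ] X) (R : X →L[ℂ] Z) :
    ∀ᶠ n in atTop, ∀ y ≠ 0, ‖R ((A ^ n) (Q y))‖ < r ^ n * ‖y‖ := by
  set c : ℝ := ‖R‖ * ‖Q‖
  have hc : 0 < (c + 1)⁻¹ := by positivity
  filter_upwards [(isLittleO_pow_of_forall_spectrum_norm_lt hr hA).bound hc] with n hn y hy
  rw [Real.norm_of_nonneg (by positivity)] at hn
  calc ‖R ((A ^ n) (Q y))‖ ≤ ‖R‖ * (((c + 1)⁻¹ * r ^ n) * (‖Q‖ * ‖y‖)) :=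
        R.le_opNorm_of_le ((A ^ n).le_of_opNorm_le_of_le hn (Q.le_opNorm y))
    _ = c / (c + 1) * (r ^ n * ‖y‖) := by ring
    _ < r ^ n * ‖y‖ :=
        mul_lt_of_lt_one_left (by positivity) ((div_lt_one (by positivity)).2 (lt_add_one c))

end Gelfand

section Expanding

variable {X : Type*} [NormedAddCommGroup X] [NormedSpace ℂ X] [CompleteSpace X] {T : X →L[ℂ] X}

lemma eq_zero_of_tendsto_pow_apply_of_forall_spectrum_one_lt
    (hT : ∀ z ∈ spectrum ℂ T, 1 < ‖z‖) {x : X}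
    (hx : Tendsto (fun n ↦ (T ^ n) x) atTop (𝓝 0)) : x = 0 := by
  obtain ⟨u, rfl⟩ : IsUnit T := spectrum.isUnit_of_zero_notMem ℂ fun h0 ↦
    zero_le_one.not_gt (norm_zero (E := ℂ) ▸ hT 0 h0)
  set S : X →L[ℂ] X := ↑u⁻¹
  have hS : ∀ z ∈ spectrum ℂ S, ‖z‖ < 1 := by
    intro z hz
    rw [← spectrum.map_inv, Set.mem_inv] at hz
    exact (one_lt_inv_iff₀.1 (norm_inv z ▸ hT _ hz)).2
  have hS_pow : Tendsto (fun n ↦ S ^ n) atTop (𝓝 0) := by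
    simpa using isLittleO_pow_of_forall_spectrum_norm_lt one_pos hS
  have hcancel (n : ℕ) : (S ^ n) ((u ^ n : X →L[ℂ] X) x) = x := by
    rw [← mul_apply_eq_comp, ← u.val_pow_eq_pow_val, ← u⁻¹.val_pow_eq_pow_val, inv_pow,
      Units.inv_mul, one_apply_eq_self]
  have hlim : Tendsto (fun n ↦ (S ^ n) ((u ^ n : X →L[ℂ] X) x)) atTop (𝓝 0) :=
    (isBoundedBilinearMap_apply.continuous.tendsto ((0 : X →L[ℂ] X), (0 : X))).comp
      (hS_pow.prodMk_nhds hx)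
  simpa only [hcancel, tendsto_const_nhds_iff] using hlim

end Expanding

section Compact

variable {𝕜 X : Type*} [NontriviallyNormedField 𝕜] [NormedAddCommGroup X] [NormedSpace 𝕜 X]

lemma isCompactOperator_of_semiconj {Y : Type*} [TopologicalSpace Y] [AddCommGroup Y] [Module 𝕜 Y]
    {Q : X →L[𝕜] Y} (hQ : IsOpenMap Q) {A : X →L[𝕜] X} {B : Y →L[𝕜] Y}
    (h : Function.Semiconj Q A B) (hA : IsCompactOperator A) : IsCompactOperator B := by
  obtain ⟨C, hC, hAC⟩ := hA
  have himage : Q '' (A ⁻¹' C) ∈ 𝓝 0 := map_zero Q ▸ hQ.image_mem_nhds hAC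
  refine ⟨Q '' C, hC.image Q.continuous, mem_of_superset himage ?_⟩
  rintro _ ⟨x, hx, rfl⟩
  exact ⟨A x, hx, h x⟩

lemma exists_eigenvector_of_mem_spectrum [CompleteSpace X] {T : X →L[𝕜] X} {lam z : 𝕜}
    (hT : IsCompactOperator (T - lam • 1 : X →L[𝕜] X)) (hz : z ∈ spectrum 𝕜 T) (hne : z ≠ lam) :
    ∃ v ≠ 0, T v = z • v := by
  have hz' : z - lam ∈ spectrum 𝕜 (T - lam • 1) := by
    rw [← Algebra.algebraMap_eq_smul_one, ← spectrum.sub_singleton_eq]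
    exact Set.sub_mem_sub hz rfl
  obtain ⟨v, hv⟩ :=
    ((hT.hasEigenvalue_iff_mem_spectrum (sub_ne_zero.2 hne)).2 hz').exists_hasEigenvector
  refine ⟨v, hv.2, ?_⟩
  simpa [sub_smul] using hv.apply_eq_smul

end Compact

section Quotient

variable {𝕜 X : Type*} [NontriviallyNormedField 𝕜] [NormedAddCommGroup X] [NormedSpace 𝕜 X]
  {F : Submodule 𝕜 X} {T : X →L[𝕜] X}

/-- The operator induced by `T` on the quotient by a `T`-invariant subspace `F`. -/
noncomputable def quotientOperator (T : X →L[𝕜] X) (h : ∀ x ∈ F, T x ∈ F) : X ⧸ F →L[𝕜] X ⧸ F :=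
  F.liftQL (F.mkQL ∘L T) fun x hx ↦ by simpa using h x hx

lemma semiconj_quotientOperator (h : ∀ x ∈ F, T x ∈ F) :
    Function.Semiconj F.mkQL T (quotientOperator T h) :=
  fun _ ↦ rfl

lemma exists_equivariant_section_of_isUnit_aeval (h : ∀ x ∈ F, T x ∈ F) {p : 𝕜[X]}
    (hp : ∀ x ∈ F, aeval T p x = 0) (hunit : IsUnit (aeval (quotientOperator T h) p)) :
    ∃ σ : X ⧸ F →L[𝕜] X, Function.RightInverse σ F.mkQL ∧
      Function.Semiconj σ (quotientOperator T h) T := by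
  obtain ⟨u, hu⟩ := hunit
  set S := quotientOperator T h
  set τ : X ⧸ F →L[𝕜] X := F.liftQL (aeval T p) hp
  have hτ : Function.Semiconj τ S T := F.mkQ_surjective.forall.2 fun x ↦
    (semiconj_aeval (Function.Commute.refl T) p x).symm
  have hτ_right (y : X ⧸ F) : F.mkQL (τ y) = (u : X ⧸ F →L[𝕜] X ⧸ F) y := by
    obtain ⟨x, rfl⟩ := F.mkQ_surjective y
    exact hu ▸ semiconj_aeval (semiconj_quotientOperator h) p x
  have hcomm : Commute ↑u⁻¹ S := by
    refine Commute.units_inv_left ?_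
    simpa only [hu, aeval_X] using (Commute.all p Polynomial.X).map (aeval S)
  refine ⟨τ ∘L ↑u⁻¹, fun y ↦ ?_, hτ.comp_left (DFunLike.congr_fun hcomm.eq)⟩
  exact (hτ_right _).trans (DFunLike.congr_fun u.mul_inv y)

end Quotient

section Riesz

variable {𝕜 X : Type*} [NontriviallyNormedField 𝕜] [NormedAddCommGroup X] [NormedSpace 𝕜 X]

lemma exists_norm_le_forall_one_le_norm_sub {F G : Submodule 𝕜 X} (hF : IsClosed (F : Set X))
    (hFG : F < G) {c : 𝕜} (hc : 1 < ‖c‖) {R : ℝ} (hR : ‖c‖ < R) :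
    ∃ e ∈ G, ‖e‖ ≤ R ∧ ∀ y ∈ F, 1 ≤ ‖e - y‖ := by
  have hclosed : IsClosed (F.comap G.subtype : Set G) := hF.preimage continuous_subtype_val
  obtain ⟨x, hxG, hxF⟩ := SetLike.exists_of_lt hFG
  obtain ⟨e, he, hdist⟩ := riesz_lemma_of_norm_lt hc hR hclosed ⟨⟨x, hxG⟩, hxF⟩
  exact ⟨e, e.2, he, fun y hy ↦ hdist ⟨y, hFG.le hy⟩ hy⟩

lemma not_isCompactOperator_of_separated {Y : Type*} [NormedAddCommGroup Y] [NormedSpace 𝕜 Y]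
    {K : X →L[𝕜] Y} {e : ℕ → X} {R δ : ℝ} (hδ : 0 < δ) (he : ∀ n, ‖e n‖ ≤ R)
    (hsep : ∀ m n, m < n → δ ≤ ‖K (e n) - K (e m)‖) : ¬ IsCompactOperator K := by
  intro hK
  obtain ⟨C, hC, hKC⟩ := hK.image_closedBall_subset_compact R
  obtain ⟨_, -, φ, hφ, hlim⟩ :=
    hC.tendsto_subseq fun n ↦ hKC ⟨e n, mem_closedBall_zero_iff.2 (he n), rfl⟩
  obtain ⟨N, hN⟩ := Metric.cauchySeq_iff'.1 hlim.cauchySeq δ hδ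
  refine (hsep (φ N) (φ (N + 1)) (hφ N.lt_succ_self)).not_gt ?_
  exact (dist_eq_norm _ _).symm.trans_lt (hN (N + 1) N.le_succ)

lemma not_isCompactOperator_of_chain {K : X →L[𝕜] X} {F : ℕ → Submodule 𝕜 X}
    (hclosed : ∀ n, IsClosed (F n : Set X)) (hF : StrictMono F) {μ : ℕ → 𝕜} {δ : ℝ} (hδ : 0 < δ)
    (hμ : ∀ n, δ ≤ ‖μ n‖) (hK : ∀ n, ∀ x ∈ F (n + 1), K x - μ n • x ∈ F n) :
    ¬ IsCompactOperator K := by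
  obtain ⟨c, hc⟩ := NormedField.exists_one_lt_norm 𝕜
  choose e he_mem he_norm he_dist using fun n ↦
    exists_norm_le_forall_one_le_norm_sub (hclosed n) (hF n.lt_succ_self) hc (lt_add_one ‖c‖)
  refine not_isCompactOperator_of_separated hδ he_norm fun m n hmn ↦ ?_
  have hμn : μ n ≠ 0 := norm_pos_iff.1 (hδ.trans_le (hμ n))
  have hK_m : K (e m) ∈ F n := hF.monotone hmn <| by
    simpa using (F (m + 1)).add_mem (hF.monotone m.le_succ (hK m _ (he_mem m)))
      ((F (m + 1)).smul_mem (μ m) (he_mem m))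
  set y := K (e m) - (K (e n) - μ n • e n)
  have hy : y ∈ F n := (F n).sub_mem hK_m (hK n _ (he_mem n))
  calc δ ≤ ‖μ n‖ * 1 := by simpa using hμ n
    _ ≤ ‖μ n‖ * ‖e n - (μ n)⁻¹ • y‖ := by
      gcongr
      exact he_dist n _ ((F n).smul_mem _ hy)
    _ = ‖K (e n) - K (e m)‖ := by
      rw [← norm_smul, smul_sub, smul_inv_smul₀ hμn]
      congr 1
      simp only [y]
      abel

end Riesz

section SpectralSubspace

variable {𝕜 X : Type*} [NontriviallyNormedField 𝕜] [NormedAddCommGroup X] [NormedSpace 𝕜 X]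
  {T : X →L[𝕜] X} {D : Set 𝕜} {F : Submodule 𝕜 X}

/-- `F` is a finite-dimensional `T`-invariant subspace such that all eigenvalues of `T` on `F` lie
in `D`. -/
structure IsInvariantWithEigenvaluesIn (T : X →L[𝕜] X) (D : Set 𝕜) (F : Submodule 𝕜 X) :
    Prop where
  finiteDimensional : FiniteDimensional 𝕜 F
  apply_mem : ∀ x ∈ F, T x ∈ F
  eigenvalue_mem : ∀ μ, ∀ x ∈ F, x ≠ 0 → T x = μ • x → μ ∈ D

/-- `F` plays the role of the range of the Riesz projection of `T` for the part `D` of the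
spectrum: `F` is finite-dimensional and invariant, the eigenvalues of `T` on `F` lie in `D`, and
`T` has no eigenvalue in `D` on the quotient `X ⧸ F`. The last condition is spelled out on
representatives. -/
structure IsSpectralSubspace (T : X →L[𝕜] X) (D : Set 𝕜) (F : Submodule 𝕜 X) : Prop
    extends IsInvariantWithEigenvaluesIn T D F where
  mem_of_apply_sub_smul_mem : ∀ μ ∈ D, ∀ x, T x - μ • x ∈ F → x ∈ F

lemma isInvariantWithEigenvaluesIn_bot : IsInvariantWithEigenvaluesIn T D ⊥ where
  finiteDimensional := inferInstance
  apply_mem := by simp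
  eigenvalue_mem _ _ hx hx0 := absurd ((Submodule.mem_bot 𝕜).1 hx) hx0

lemma apply_sub_smul_mem_of_mem_sup_span (hF : ∀ x ∈ F, T x ∈ F) {v : X} {μ : 𝕜}
    (hv : T v - μ • v ∈ F) {x : X} (hx : x ∈ F ⊔ Submodule.span 𝕜 {v}) : T x - μ • x ∈ F := by
  have hle : F ⊔ Submodule.span 𝕜 {v} ≤ F.comap (T - μ • 1 : X →L[𝕜] X).toLinearMap :=
    sup_le (fun y hy ↦ F.sub_mem (hF y hy) (F.smul_mem μ hy))
      ((Submodule.span_singleton_le_iff_mem _ _).2 hv)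
  exact hle hx

namespace IsInvariantWithEigenvaluesIn

lemma sup_span_singleton (hF : IsInvariantWithEigenvaluesIn T D F) {v : X} {μ : 𝕜} (hμ : μ ∈ D)
    (hv : T v - μ • v ∈ F) :
    IsInvariantWithEigenvaluesIn T D (F ⊔ Submodule.span 𝕜 {v}) where
  finiteDimensional := by
    have := hF.finiteDimensional
    infer_instance
  apply_mem x hx := by
    simpa using add_mem
      (Submodule.mem_sup_left (apply_sub_smul_mem_of_mem_sup_span hF.apply_mem hv hx))
      (Submodule.smul_mem _ μ hx)
  eigenvalue_mem ν x hx hx0 hνx := by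
    have hsmul : (ν - μ) • x ∈ F := by
      simpa only [hνx, ← sub_smul] using apply_sub_smul_mem_of_mem_sup_span hF.apply_mem hv hx
    rcases eq_or_ne ν μ with rfl | hne
    · exact hμ
    · exact hF.eigenvalue_mem ν x ((F.smul_mem_iff (sub_ne_zero.2 hne)).1 hsmul) hx0 hνx

lemma exists_lt_of_not_isSpectralSubspace (hF : IsInvariantWithEigenvaluesIn T D F)
    (hF' : ¬ IsSpectralSubspace T D F) :
    ∃ G, IsInvariantWithEigenvaluesIn T D G ∧ F < G ∧ ∃ μ ∈ D, ∀ x ∈ G, T x - μ • x ∈ F := by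
  obtain ⟨μ, hμ, v, hv, hvF⟩ : ∃ μ ∈ D, ∃ v, T v - μ • v ∈ F ∧ v ∉ F := by
    by_contra! h
    exact hF' ⟨hF, h⟩
  exact ⟨_, hF.sup_span_singleton hμ hv, Submodule.lt_sup_iff_notMem.2 hvF, μ, hμ,
    fun x ↦ apply_sub_smul_mem_of_mem_sup_span hF.apply_mem hv⟩

end IsInvariantWithEigenvaluesIn

lemma exists_isSpectralSubspace [CompleteSpace 𝕜] {lam : 𝕜}
    (hT : IsCompactOperator (T - lam • 1 : X →L[𝕜] X)) {δ : ℝ} (hδ : 0 < δ)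
    (hD : ∀ μ ∈ D, δ ≤ ‖μ - lam‖) : ∃ F, IsSpectralSubspace T D F := by
  by_contra! hnone
  choose! next hnext_inv hlt μ hμ hsub using
    fun F (hF : IsInvariantWithEigenvaluesIn T D F) ↦
      hF.exists_lt_of_not_isSpectralSubspace (hnone F)
  set F : ℕ → Submodule 𝕜 X := fun n ↦ next^[n] ⊥
  have hsucc (n : ℕ) : F (n + 1) = next (F n) := Function.iterate_succ_apply' _ _ _
  have hinv (n : ℕ) : IsInvariantWithEigenvaluesIn T D (F n) := by
    induction n with
    | zero => exact isInvariantWithEigenvaluesIn_bot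
    | succ n ih => exact hsucc n ▸ hnext_inv _ ih
  refine not_isCompactOperator_of_chain (μ := fun n ↦ μ (F n) - lam) (fun n ↦ ?_)
    (strictMono_nat_of_lt_succ fun n ↦ hsucc n ▸ hlt _ (hinv n)) hδ (fun n ↦ hD _ (hμ _ (hinv n)))
    (fun n x hx ↦ ?_) hT
  · have := (hinv n).finiteDimensional
    exact (F n).closed_of_finiteDimensional
  · have hshift : (T - lam • 1 : X →L[𝕜] X) x - (μ (F n) - lam) • x = T x - μ (F n) • x := by
      simp [sub_smul]
    exact hshift ▸ hsub _ (hinv n) x (hsucc n ▸ hx)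

namespace IsInvariantWithEigenvaluesIn

lemma mem_of_hasEigenvalue_restrict (hF : IsInvariantWithEigenvaluesIn T D F) {z : 𝕜}
    (hz : Module.End.HasEigenvalue (T.restrict hF.apply_mem).toLinearMap z) : z ∈ D := by
  obtain ⟨v, hv⟩ := hz.exists_hasEigenvector
  exact hF.eigenvalue_mem z v v.2 (by simpa using hv.2) (congrArg Subtype.val hv.apply_eq_smul)

lemma spectrum_restrict_subset [CompleteSpace 𝕜] (hF : IsInvariantWithEigenvaluesIn T D F) :
    spectrum 𝕜 (T.restrict hF.apply_mem) ⊆ D := by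
  have := hF.finiteDimensional
  have := FiniteDimensional.complete 𝕜 F
  intro z hz
  rw [ContinuousLinearMap.spectrum_eq, ← Module.End.hasEigenvalue_iff_mem_spectrum] at hz
  exact hF.mem_of_hasEigenvalue_restrict hz

lemma exists_monic_aeval_apply_eq_zero (hF : IsInvariantWithEigenvaluesIn T D F) :
    ∃ p : 𝕜[X], p.Monic ∧ (∀ z, p.IsRoot z → z ∈ D) ∧ ∀ x ∈ F, aeval T p x = 0 := by
  have := hF.finiteDimensional
  set A := T.restrict hF.apply_mem
  set p := A.toLinearMap.charpoly
  have hA : aeval A p = 0 := ContinuousLinearMap.coe_injective <|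
    (toLinearMap_aeval A p).trans A.toLinearMap.aeval_self_charpoly
  refine ⟨p, A.toLinearMap.charpoly_monic, fun z hz ↦ hF.mem_of_hasEigenvalue_restrict <|
    (Module.End.hasEigenvalue_iff_isRoot_charpoly _ z).2 hz, fun x hx ↦ ?_⟩
  exact (semiconj_aeval (semiconj_subtypeL hF.apply_mem) p ⟨x, hx⟩).symm.trans <| by
    simp only [A, hA, zero_apply, map_zero]

end IsInvariantWithEigenvaluesIn

variable [CompleteSpace X] {lam : 𝕜}

namespace IsSpectralSubspace

lemma disjoint_spectrum_quotientOperator [IsClosed (F : Set X)] (hF : IsSpectralSubspace T D F)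
    (hT : IsCompactOperator (T - lam • 1 : X →L[𝕜] X)) (hlam : lam ∉ D) :
    Disjoint D (spectrum 𝕜 (quotientOperator T hF.apply_mem)) := by
  refine Set.disjoint_left.2 fun z hzD hz ↦ ?_
  set S := quotientOperator T hF.apply_mem
  have hS : IsCompactOperator (S - lam • 1 : X ⧸ F →L[𝕜] X ⧸ F) :=
    isCompactOperator_of_semiconj F.isOpenQuotientMap_mkQL.isOpenMap (fun _ ↦ rfl) hT
  obtain ⟨v, hv, hSv⟩ :=
    exists_eigenvector_of_mem_spectrum hS hz (ne_of_mem_of_not_mem hzD hlam)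
  obtain ⟨x, rfl⟩ := F.mkQ_surjective v
  have hx : T x - z • x ∈ F := (Submodule.Quotient.eq F).1 hSv
  exact hv ((Submodule.Quotient.mk_eq_zero F).2 (hF.mem_of_apply_sub_smul_mem z hzD x hx))

lemma exists_equivariant_section [IsAlgClosed 𝕜] [IsClosed (F : Set X)]
    (hF : IsSpectralSubspace T D F)
    (hT : IsCompactOperator (T - lam • 1 : X →L[𝕜] X)) (hlam : lam ∉ D) :
    ∃ σ : X ⧸ F →L[𝕜] X, Function.RightInverse σ F.mkQL ∧
      Function.Semiconj σ (quotientOperator T hF.apply_mem) T := by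
  obtain ⟨p, hmonic, hroots, hp⟩ := hF.exists_monic_aeval_apply_eq_zero
  refine exists_equivariant_section_of_isUnit_aeval hF.apply_mem hp <|
    isUnit_aeval_of_forall_mem_spectrum_not_isRoot hmonic (IsAlgClosed.splits p) fun z hz hroot ↦ ?_
  exact (hF.disjoint_spectrum_quotientOperator hT hlam).notMem_of_mem_left (hroots z hroot) hz

end IsSpectralSubspace

end SpectralSubspace

section Growth

variable {X : Type*} [NormedAddCommGroup X] [NormedSpace ℂ X] {T : X →L[ℂ] X}
  {F : Submodule ℂ X} {D : Set ℂ} {lam : ℂ} {r : ℝ}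

namespace IsInvariantWithEigenvaluesIn

lemma eventually_norm_pow_apply_lt (hF : IsInvariantWithEigenvaluesIn T D F) (hr : 0 < r)
    (hD : ∀ z ∈ D, ‖z‖ < r) : ∀ᶠ n in atTop, ∀ x ∈ F, x ≠ 0 → ‖(T ^ n) x‖ < r ^ n * ‖x‖ := by
  have := hF.finiteDimensional
  have := FiniteDimensional.complete ℂ F
  set A := T.restrict hF.apply_mem
  have hAT : Function.Semiconj F.subtypeL A T := semiconj_subtypeL hF.apply_mem
  filter_upwards [eventually_norm_comp_pow_apply_lt hr
    (fun z hz ↦ hD z (hF.spectrum_restrict_subset hz)) (.id ℂ F) F.subtypeL] with n hn x hxF hx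
  have hAx : F.subtypeL ((A ^ n) ⟨x, hxF⟩) = (T ^ n) x := semiconj_pow hAT n ⟨x, hxF⟩
  rw [← hAx]
  exact hn ⟨x, hxF⟩ fun h ↦ hx (congrArg Subtype.val h)

lemma eq_zero_of_tendsto_pow_apply (hF : IsInvariantWithEigenvaluesIn T D F)
    (hD : ∀ z ∈ D, 1 < ‖z‖) {x : X} (hxF : x ∈ F)
    (hx : Tendsto (fun n ↦ (T ^ n) x) atTop (𝓝 0)) : x = 0 := by
  have := hF.finiteDimensional
  have := FiniteDimensional.complete ℂ F
  set A := T.restrict hF.apply_mem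
  have hAT : Function.Semiconj F.subtypeL A T := semiconj_subtypeL hF.apply_mem
  have hAx : Tendsto (fun n ↦ (A ^ n) ⟨x, hxF⟩) atTop (𝓝 0) := by
    refine tendsto_subtype_rng.2 (hx.congr fun n ↦ ?_)
    exact (semiconj_pow hAT n ⟨x, hxF⟩).symm
  exact congrArg Subtype.val <| eq_zero_of_tendsto_pow_apply_of_forall_spectrum_one_lt
    (fun z hz ↦ hD z (hF.spectrum_restrict_subset hz)) hAx

end IsInvariantWithEigenvaluesIn

variable [CompleteSpace X]

namespace IsSpectralSubspace

lemma mem_of_tendsto_pow_apply (hF : IsSpectralSubspace T (Metric.closedBall 0 1) F)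
    (hT : IsCompactOperator (T - lam • 1 : X →L[ℂ] X)) (hlam : 1 < ‖lam‖) {x : X}
    (hx : Tendsto (fun n ↦ (T ^ n) x) atTop (𝓝 0)) : x ∈ F := by
  have := hF.finiteDimensional
  have : IsClosed (F : Set X) := F.closed_of_finiteDimensional
  have hdisj := hF.disjoint_spectrum_quotientOperator hT (by simpa using hlam)
  exact (Submodule.Quotient.mk_eq_zero F).1 <|
    eq_zero_of_tendsto_pow_apply_of_forall_spectrum_one_lt
      (fun z hz ↦ by simpa using hdisj.notMem_of_mem_right hz)
      (tendsto_pow_apply_of_semiconj (semiconj_quotientOperator hF.apply_mem) hx)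

lemma eventually_norm_pow_apply_lt (hF : IsSpectralSubspace T (Metric.ball 0 r)ᶜ F)
    (hT : IsCompactOperator (T - lam • 1 : X →L[ℂ] X)) (hlam : ‖lam‖ < r) (hr : 1 < r) :
    ∀ᶠ n in atTop, ∀ x ≠ 0, Tendsto (fun k ↦ (T ^ k) x) atTop (𝓝 0) →
      ‖(T ^ n) x‖ < r ^ n * ‖x‖ := by
  have := hF.finiteDimensional
  have : IsClosed (F : Set X) := F.closed_of_finiteDimensional
  have hlamD : lam ∉ (Metric.ball 0 r)ᶜ := by simpa using hlam
  have hdisj := hF.disjoint_spectrum_quotientOperator hT hlamD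
  obtain ⟨σ, hσ, hσT⟩ := hF.exists_equivariant_section hT hlamD
  set S := quotientOperator T hF.apply_mem
  have hTS : Function.Semiconj F.mkQL T S := semiconj_quotientOperator hF.apply_mem
  have hS : ∀ z ∈ spectrum ℂ S, ‖z‖ < r := fun z hz ↦ by
    simpa using hdisj.notMem_of_mem_right hz
  filter_upwards [eventually_norm_comp_pow_apply_lt (one_pos.trans hr) hS F.mkQL σ]
    with n hn x hx0 hx
  have hσx : Tendsto (fun k ↦ (T ^ k) (σ (F.mkQL x))) atTop (𝓝 0) :=
    tendsto_pow_apply_of_semiconj hσT (tendsto_pow_apply_of_semiconj hTS hx)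
  have hmem : x - σ (F.mkQL x) ∈ F := (Submodule.Quotient.eq F).1 (hσ _).symm
  have heq : x = σ (F.mkQL x) := sub_eq_zero.1 <|
    hF.eq_zero_of_tendsto_pow_apply (fun z hz ↦ hr.trans_le (by simpa using hz)) hmem <| by
      simpa using hx.sub hσx
  have : (T ^ n) x = σ ((S ^ n) (F.mkQL x)) := by
    conv_lhs => rw [heq]
    exact ((semiconj_pow hσT n) _).symm
  rw [this]
  exact hn x hx0

end IsSpectralSubspace

lemma eventually_norm_pow_apply_lt_of_isCompactOperator_sub
    (hT : IsCompactOperator (T - lam • 1 : X →L[ℂ] X)) (hr : 1 < r) :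
    ∀ᶠ n in atTop, ∀ x ≠ 0, Tendsto (fun k ↦ (T ^ k) x) atTop (𝓝 0) →
      ‖(T ^ n) x‖ < r ^ n * ‖x‖ := by
  rcases le_or_gt ‖lam‖ 1 with hlam | hlam
  · obtain ⟨F, hF⟩ := exists_isSpectralSubspace (D := (Metric.ball 0 r)ᶜ) hT
      (sub_pos.2 (hlam.trans_lt hr)) fun μ hμ ↦ by
        have : r ≤ ‖μ‖ := by simpa using hμ
        linarith [norm_sub_norm_le μ lam]
    exact hF.eventually_norm_pow_apply_lt hT (hlam.trans_lt hr) hr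
  · obtain ⟨F, hF⟩ := exists_isSpectralSubspace (D := Metric.closedBall 0 1) hT (sub_pos.2 hlam)
      fun μ hμ ↦ by
        linarith [norm_sub_rev μ lam, norm_sub_norm_le lam μ, mem_closedBall_zero_iff.1 hμ]
    filter_upwards [hF.toIsInvariantWithEigenvaluesIn.eventually_norm_pow_apply_lt
      (one_pos.trans hr) fun z hz ↦ (mem_closedBall_zero_iff.1 hz).trans_lt hr] with n hn x hx0 hx
    exact hn x (hF.mem_of_tendsto_pow_apply hT hlam hx) hx0

end Growth

theorem stmt_14_general {X : Type*} [NormedAddCommGroup X] [NormedSpace ℂ X] [CompleteSpace X]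
    (K : X →L[ℂ] X) (hK : IsCompactOperator (⇑K)) (lam : ℂ) :
    ¬ NormUnimodal (lam • (1 : X →L[ℂ] X) + K) := by
  rintro ⟨r, hr, hunimodal⟩
  have hT : IsCompactOperator (lam • 1 + K - lam • 1 : X →L[ℂ] X) := by
    rwa [add_sub_cancel_left]
  obtain ⟨n, hn, hpos⟩ := ((eventually_norm_pow_apply_lt_of_isCompactOperator_sub hT hr).and
    (eventually_ge_atTop 1)).exists
  obtain ⟨x, hx0, hx, hgrowth⟩ := hunimodal n
  exact (hn x hx0 (tendsto_zero_iff_norm_tendsto_zero.2 hx)).not_ge (hgrowth n hpos le_rfl)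

/-- For a compact operator K on a complex Hilbert space and any
λ ∈ ℂ, the operator λI + K is not norm-unimodal. -/
theorem stmt_14 {H : Type*} [NormedAddCommGroup H] [InnerProductSpace ℂ H]
    [CompleteSpace H]
    (K : H →L[ℂ] H) (hK : IsCompactOperator (⇑K)) (lam : ℂ) :
    ¬ NormUnimodal (lam • (1 : H →L[ℂ] H) + K) :=
  stmt_14_general K hK lam
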